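/- Let Cₙ be the cycle of order n ≥ 6 with two disjoint copies G₁ (vertices u₁,…,uₙ) and G₂ (vertices v₁,…,vₙ), and let f₀ : V(G₁) → V(G₂) be the constant function f₀(uᵢ) = v₁ for all i. Let S be a minimum resolving set of C(Cₙ, f₀) and list S ∩ V(G₁) in cyclic order around G₁ as u_{i₁}, u_{i₂}, …, u_{i_t}. If two cyclically consecutive vertices u_{i_j}, u_{i_{j+1}} of S ∩ V(G₁) satisfy d_{G₁}(u_{i_j}, u_{i_{j+1}}) = 3 (with no vertex of S ∩ V(G₁) strictly between them), then the cyclic gap from u_{i_{j-1}} to u_{i_j} is at most 2 and the cyclic gap from u_{i_{j+1}} to u_{i_{j+2}} is at most 2 (i.e., d_{G₁}(u_{i_j}, u_{i_{j-1}}) ≤ 2 and d_{G₁}(u_{i_{j+2}}, u_{i_{j+1}}) ≤ 2). -/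

import Mathlib

/-- The functigraph `C(G, f)`: two disjoint copies of `G` (as `Sum.inl`/`Sum.inr`),
with an edge from each `Sum.inl u` to `Sum.inr (f u)`. -/
def functigraph {V : Type*} (G : SimpleGraph V) (f : V → V) : SimpleGraph (V ⊕ V) :=
  SimpleGraph.fromRel (fun x y =>
    match x, y with
    | Sum.inl a, Sum.inl b => G.Adj a b
    | Sum.inr a, Sum.inr b => G.Adj a b
    | Sum.inl a, Sum.inr b => f a = b
    | Sum.inr _, Sum.inl _ => False)

/-- `S` is a resolving set of `H`: every pair of distinct vertices is resolved by some `w ∈ S`. -/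
def IsResolving {V : Type*} (H : SimpleGraph V) (S : Set V) : Prop :=
  ∀ x y : V, x ≠ y → ∃ w ∈ S, H.dist x w ≠ H.dist y w

/-- The metric dimension of `H`: minimum cardinality of a (finite) resolving set. -/
noncomputable def metricDim {V : Type*} (H : SimpleGraph V) : ℕ :=
  sInf {k | ∃ S : Set V, IsResolving H S ∧ S.Finite ∧ S.ncard = k}

/-- The cycle graph on `ZMod n` (for `n ≥ 3`): `i` is adjacent to `i ± 1`. -/
def cycGraph (n : ℕ) : SimpleGraph (ZMod n) :=
  SimpleGraph.fromRel (fun i j => j = i + 1)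

/-- The closed neighborhood `N[S]` of a set `S` in `H`. -/
def closedNbhd {V : Type*} (H : SimpleGraph V) (S : Set V) : Set V :=
  S ∪ {x | ∃ s ∈ S, H.Adj x s}

/-!
In the functigraph of a constant map every vertex of the first copy is adjacent to the hub `v`.
Hence all vertices of the first copy are equally far from each vertex of the second, and distances
inside the first copy are `0`, `1` or `2` according to equality and adjacency in `G`. So two
vertices `x`, `y` of the first copy can only be resolved by themselves or by a vertex adjacent to
exactly one of them. For the neighbours `b - 1`, `b + 1` of a vertex `b` of the cycle this leaves
`b - 1`, `b + 1`, `b - 2`, `b + 2`: a resolving set cannot miss two vertices on both sides of `b`.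
-/

section Distances

variable {V : Type*} {G : SimpleGraph V}

theorem functigraph_adj_inl_inl {f : V → V} {x y : V} :
    (functigraph G f).Adj (Sum.inl x) (Sum.inl y) ↔ G.Adj x y := by
  simpa [functigraph, G.adj_comm y x] using SimpleGraph.Adj.ne

theorem functigraph_adj_inl_inr {f : V → V} {x y : V} :
    (functigraph G f).Adj (Sum.inl x) (Sum.inr y) ↔ f x = y := by
  simp [functigraph]

theorem edist_functigraph_inl_inl_eq_two {f : V → V} {x y : V} (hf : f x = f y) (hne : x ≠ y)
    (hadj : ¬ G.Adj x y) : (functigraph G f).edist (Sum.inl x) (Sum.inl y) = 2 := by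
  have hx : (functigraph G f).Adj (Sum.inl x) (Sum.inr (f x)) := functigraph_adj_inl_inr.2 rfl
  have hy : (functigraph G f).Adj (Sum.inl y) (Sum.inr (f x)) :=
    functigraph_adj_inl_inr.2 hf.symm
  exact SimpleGraph.edist_eq_two_iff.2
    ⟨Sum.inl_injective.ne hne, mt functigraph_adj_inl_inl.1 hadj, Sum.inr (f x), hx, hy⟩

-- Every walk from the first copy to the second enters the latter at `v`.
theorem edist_functigraph_const_add_one_le_length {v x y : V}
    (p : (functigraph G fun _ ↦ v).Walk (Sum.inl x) (Sum.inr y)) :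
    (functigraph G fun _ ↦ v).edist (Sum.inr v) (Sum.inr y) + 1 ≤ p.length := by
  generalize ha : Sum.inl x = a, hb : Sum.inr y = b at p
  induction p generalizing x with
  | nil => simp [← hb] at ha
  | @cons a c b h p ih =>
    subst ha hb
    rw [SimpleGraph.Walk.length_cons, Nat.cast_add_one]
    gcongr
    rcases c with z | z
    · exact le_self_add.trans (ih rfl rfl)
    · obtain rfl : v = z := functigraph_adj_inl_inr.1 h
      exact SimpleGraph.edist_le p

theorem edist_functigraph_const_inl_inr (v x y : V) :
    (functigraph G fun _ ↦ v).edist (Sum.inl x) (Sum.inr y) =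
      (functigraph G fun _ ↦ v).edist (Sum.inr v) (Sum.inr y) + 1 := by
  have hadj : (functigraph G fun _ ↦ v).Adj (Sum.inl x) (Sum.inr v) :=
    functigraph_adj_inl_inr.2 rfl
  refine le_antisymm ?_ (le_iInf edist_functigraph_const_add_one_le_length)
  calc (functigraph G fun _ ↦ v).edist (Sum.inl x) (Sum.inr y)
      ≤ (functigraph G fun _ ↦ v).edist (Sum.inl x) (Sum.inr v) +
          (functigraph G fun _ ↦ v).edist (Sum.inr v) (Sum.inr y) := SimpleGraph.edist_triangle
    _ = (functigraph G fun _ ↦ v).edist (Sum.inr v) (Sum.inr y) + 1 := by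
      rw [SimpleGraph.edist_eq_one_iff_adj.2 hadj, add_comm]

theorem IsResolving.exists_inl_mem_of_ne {v x y : V} {S : Set (V ⊕ V)}
    (hS : IsResolving (functigraph G fun _ ↦ v) S) (hxy : x ≠ y) :
    ∃ c, Sum.inl c ∈ S ∧ (c = x ∨ c = y ∨ ¬ (G.Adj x c ↔ G.Adj y c)) := by
  obtain ⟨c | z, hmem, hdist⟩ := hS _ _ (Sum.inl_injective.ne hxy)
  · refine ⟨c, hmem, ?_⟩
    by_contra! ⟨hcx, hcy, hiff⟩
    refine hdist (congrArg ENat.toNat ?_)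
    by_cases hadj : G.Adj x c
    · rw [SimpleGraph.edist_eq_one_iff_adj.2 (functigraph_adj_inl_inl.2 hadj),
        SimpleGraph.edist_eq_one_iff_adj.2 (functigraph_adj_inl_inl.2 (hiff.1 hadj))]
    · rw [edist_functigraph_inl_inl_eq_two (f := fun _ ↦ v) rfl hcx.symm hadj,
        edist_functigraph_inl_inl_eq_two (f := fun _ ↦ v) rfl hcy.symm (mt hiff.2 hadj)]
  · refine absurd (congrArg ENat.toNat ?_) hdist
    rw [edist_functigraph_const_inl_inr, edist_functigraph_const_inl_inr]

end Distances

section Cycle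

variable {n : ℕ}

theorem cycGraph_adj {i j : ZMod n} :
    (cycGraph n).Adj i j ↔ i ≠ j ∧ (j = i + 1 ∨ i = j + 1) :=
  SimpleGraph.fromRel_adj _ _ _

theorem eq_sub_two_or_eq_add_two_of_not_adj_iff {b c : ZMod n}
    (h : ¬ ((cycGraph n).Adj (b - 1) c ↔ (cycGraph n).Adj (b + 1) c)) :
    c = b - 2 ∨ c = b + 2 := by
  simp only [cycGraph_adj] at h
  grind

theorem IsResolving.sub_mem_or_add_mem {v : ZMod n} {S : Set (ZMod n ⊕ ZMod n)}
    (hS : IsResolving (functigraph (cycGraph n) fun _ ↦ v) S) (htwo : (2 : ZMod n) ≠ 0)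
    (b : ZMod n) :
    (Sum.inl (b - 1) ∈ S ∨ Sum.inl (b - 2) ∈ S) ∨
      (Sum.inl (b + 1) ∈ S ∨ Sum.inl (b + 2) ∈ S) := by
  have hne : b - 1 ≠ b + 1 := fun h ↦ htwo (by linear_combination -h)
  obtain ⟨c, hc, rfl | rfl | hadj⟩ := hS.exists_inl_mem_of_ne hne
  · exact .inl (.inl hc)
  · exact .inr (.inl hc)
  · obtain rfl | rfl := eq_sub_two_or_eq_add_two_of_not_adj_iff hadj
    · exact .inl (.inr hc)
    · exact .inr (.inr hc)

end Cycle

theorem stmt11_general {n : ℕ} {v : ZMod n} {S : Set (ZMod n ⊕ ZMod n)}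
    (hres : IsResolving (functigraph (cycGraph n) fun _ ↦ v) S)
    {a : ZMod n} (ha : Sum.inl a ∈ S) (h1 : Sum.inl (a + 1) ∉ S) (h2 : Sum.inl (a + 2) ∉ S) :
    (Sum.inl (a - 1) ∈ S ∨ Sum.inl (a - 2) ∈ S) ∧
    (Sum.inl (a + 3 + 1) ∈ S ∨ Sum.inl (a + 3 + 2) ∈ S) := by
  have htwo : (2 : ZMod n) ≠ 0 := fun h ↦ h2 (by rwa [h, add_zero])
  have hsub_one : a + 3 - 1 = a + 2 := by ring
  have hsub_two : a + 3 - 2 = a + 1 := by ring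
  refine ⟨(hres.sub_mem_or_add_mem htwo a).resolve_right (not_or_intro h1 h2),
    (hres.sub_mem_or_add_mem htwo (a + 3)).resolve_left (not_or_intro ?_ ?_)⟩
  · rwa [hsub_one]
  · rwa [hsub_two]

theorem stmt11 (n : ℕ) (hn : 6 <= n) (S : Set (ZMod n ⊕ ZMod n))
    (hres : IsResolving (functigraph (cycGraph n) (fun _ => (0 : ZMod n))) S)
    (hfin : S.Finite)
    (hmin : S.ncard = metricDim (functigraph (cycGraph n) (fun _ => (0 : ZMod n))))
    (a : ZMod n) (ha : Sum.inl a ∈ S) (hb : Sum.inl (a + 3) ∈ S)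
    (h1 : Sum.inl (a + 1) ∉ S) (h2 : Sum.inl (a + 2) ∉ S) :
    (Sum.inl (a - 1) ∈ S ∨ Sum.inl (a - 2) ∈ S) ∧
    (Sum.inl (a + 3 + 1) ∈ S ∨ Sum.inl (a + 3 + 2) ∈ S) :=
  stmt11_general hres ha h1 h2
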